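/- arXiv:2308.12614 — 2 statements merged into one kernel-verified Lean document; each statement's English description precedes it below -/
import Mathlib

section
/- A graph G is a split graph if and only if both G and its complement are chordal. -/
/-- A graph is chordal: it contains no induced cycle of length at least 4. -/
def IsChordal {V : Type*} (G : SimpleGraph V) : Prop :=
  ∀ n : ℕ, 4 ≤ n → ¬ ∃ f : ZMod n → V, Function.Injective f ∧
    ∀ i j : ZMod n, G.Adj (f i) (f j) ↔ (j = i + 1 ∨ i = j + 1)

/-- A split graph: the vertex set partitions into a clique and an independent set. -/
def IsSplit {V : Type*} (G : SimpleGraph V) : Prop :=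
  ∃ K S : Set V, K ∪ S = Set.univ ∧ K ∩ S = ∅ ∧
    G.IsClique K ∧ ∀ u ∈ S, ∀ v ∈ S, ¬ G.Adj u v

namespace IsChordal

variable {V : Type*} {G : SimpleGraph V}

theorem false_of_four_cycle (hG : IsChordal G) {a b c d : V} (hab : G.Adj a b) (hbc : G.Adj b c)
    (hcd : G.Adj c d) (hda : G.Adj d a) (hac : ¬ G.Adj a c) (hbd : ¬ G.Adj b d)
    (nac : a ≠ c) (nbd : b ≠ d) : False := by
  refine hG 4 le_rfl ⟨(![a, b, c, d] : Fin 4 → V), fun (i j : Fin 4) h => ?_,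
    fun (i j : Fin 4) => ?_⟩
  · change (i : Fin 4) = j
    have := hab.ne
    have := hbc.ne
    have := hcd.ne
    have := hda.ne
    fin_cases i <;> fin_cases j <;> simp_all
  · change _ ↔ ((j : Fin 4) = i + 1 ∨ (i : Fin 4) = j + 1)
    fin_cases i <;> fin_cases j <;> simp_all [G.adj_comm]

theorem false_of_five_cycle (hG : IsChordal G) {a b c d e : V} (hab : G.Adj a b)
    (hbc : G.Adj b c) (hcd : G.Adj c d) (hde : G.Adj d e) (hea : G.Adj e a) (hac : ¬ G.Adj a c)
    (hbd : ¬ G.Adj b d) (hce : ¬ G.Adj c e) (hda : ¬ G.Adj d a) (heb : ¬ G.Adj e b) : False := by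
  have nac : a ≠ c := by rintro rfl; exact hda hcd.symm
  have nbd : b ≠ d := by rintro rfl; exact heb hde.symm
  have nce : c ≠ e := by rintro rfl; exact hac hea.symm
  have nda : d ≠ a := by rintro rfl; exact hbd hab.symm
  have neb : e ≠ b := by rintro rfl; exact hce hbc.symm
  refine hG 5 (by norm_num) ⟨(![a, b, c, d, e] : Fin 5 → V), fun (i j : Fin 5) h => ?_,
    fun (i j : Fin 5) => ?_⟩
  · change (i : Fin 5) = j
    have := hab.ne
    have := hbc.ne
    have := hcd.ne
    have := hde.ne
    have := hea.ne
    fin_cases i <;> fin_cases j <;> simp_all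
  · change _ ↔ ((j : Fin 5) = i + 1 ∨ (i : Fin 5) = j + 1)
    fin_cases i <;> fin_cases j <;> simp_all [G.adj_comm]

theorem false_of_two_disjoint_edges (hG : IsChordal Gᶜ) {a b c d : V} (hab : G.Adj a b)
    (hcd : G.Adj c d) (hac : ¬ G.Adj a c) (had : ¬ G.Adj a d) (hbc : ¬ G.Adj b c)
    (hbd : ¬ G.Adj b d) : False := by
  have nac : a ≠ c := by rintro rfl; exact had hcd
  have nad : a ≠ d := by rintro rfl; exact hac hcd.symm
  have nbc : b ≠ c := by rintro rfl; exact hac hab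
  have nbd : b ≠ d := by rintro rfl; exact had hab
  refine hG.false_of_four_cycle (a := a) (b := c) (c := b) (d := d) ?_ ?_ ?_ ?_ ?_ ?_ hab.ne hcd.ne
    <;> simp_all [G.adj_comm, eq_comm]

end IsChordal

namespace IsSplit

variable {V : Type*} {G : SimpleGraph V}

theorem compl (h : IsSplit G) : IsSplit Gᶜ := by
  obtain ⟨K, S, hU, hI, hK, hS⟩ := h
  refine ⟨S, K, by rwa [Set.union_comm], by rwa [Set.inter_comm], fun u hu v hv huv => ?_,
    fun u hu v hv huv => ?_⟩
  · exact (G.compl_adj u v).2 ⟨huv, hS u hu v hv⟩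
  · exact ((G.compl_adj u v).1 huv).2 (hK hu hv huv.ne)

theorem isChordal (h : IsSplit G) : IsChordal G := by
  obtain ⟨K, S, hU, -, hK, hS⟩ := h
  rintro n hn ⟨f, hf, hadj⟩
  have cast_ne (k : ℕ) (hk : 0 < k) (hkn : k < n) : (k : ZMod n) ≠ 0 := by
    rw [Ne, ZMod.natCast_eq_zero_iff]
    exact Nat.not_dvd_of_pos_of_lt hk hkn
  have h1 : (1 : ZMod n) ≠ 0 := by simpa using cast_ne 1 (by omega) (by omega)
  have h2 : (2 : ZMod n) ≠ 0 := by simpa using cast_ne 2 (by omega) (by omega)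
  have h3 : (3 : ZMod n) ≠ 0 := by simpa using cast_ne 3 (by omega) (by omega)
  have mem (i : ZMod n) : f i ∈ K ∨ f i ∈ S := by
    rw [← Set.mem_union, hU]
    trivial
  have mem_K (i : ZMod n) (hi : f i ∈ S) : f (i + 1) ∈ K :=
    (mem _).resolve_right fun hi' => hS _ hi _ hi' ((hadj _ _).2 (Or.inl rfl))
  have mem_S (i : ZMod n) (hi : f i ∈ K) : f (i + 2) ∈ S := by
    refine (mem _).resolve_left fun hi' => ?_
    have hne : f i ≠ f (i + 2) := fun e => h2 (by linear_combination -(hf e))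
    rcases (hadj _ _).1 (hK hi hi' hne) with e | e
    · exact h1 (by linear_combination e)
    · exact h3 (by linear_combination -e)
  have not_mem_S (i : ZMod n) : f i ∉ S := fun hi => by
    have hi1 := mem_K i hi
    have hi3 := mem_S _ hi1
    have hi2 : f (i + 2) ∈ K := (mem _).resolve_right fun hi' =>
      hS _ hi' _ hi3 ((hadj _ _).2 (Or.inl (by ring)))
    exact hS _ hi3 _ (mem_S _ hi2) ((hadj _ _).2 (Or.inl (by ring)))
  exact not_mem_S _ (mem_S 0 ((mem 0).resolve_right (not_mem_S 0)))

end IsSplit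

/-- In a graph without induced `C₄` and `2K₂`, the endpoints of an edge that both have a
non-neighbour in a clique can be ordered so that the first has exactly one non-neighbour there,
and that vertex is also a non-neighbour of the second. -/
theorem SimpleGraph.IsClique.exists_unique_nonadj {V : Type*} {G : SimpleGraph V}
    (hG : IsChordal G) (hGc : IsChordal Gᶜ) {K : Set V} (hK : G.IsClique K) {u v : V}
    (huv : G.Adj u v) (hu : ∃ a ∈ K, ¬ G.Adj u a) (hv : ∃ a ∈ K, ¬ G.Adj v a)
    (huK : u ∉ K) (hvK : v ∉ K) :
    ∃ x y z, G.Adj x y ∧ x ∉ K ∧ z ∈ K ∧ ¬ G.Adj x z ∧ ¬ G.Adj y z ∧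
      ∀ k ∈ K, k ≠ z → G.Adj x k := by
  have common {a b : V} (ha : a ∈ K) (hb : b ∈ K) (hua : ¬ G.Adj u a) (hva : ¬ G.Adj v a)
      (hub : ¬ G.Adj u b) (hvb : ¬ G.Adj v b) : a = b := by
    by_contra hab
    exact hGc.false_of_two_disjoint_edges huv (hK ha hb hab) hua hub hva hvb
  have nested {a b : V} (ha : a ∈ K) (hb : b ∈ K) (hua : ¬ G.Adj u a) (hva : G.Adj v a)
      (hub : G.Adj u b) (hvb : ¬ G.Adj v b) : False := by
    have hab : a ≠ b := by rintro rfl; exact hua hub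
    exact hG.false_of_four_cycle (hK ha hb hab) hub.symm huv hva (fun h => hua h.symm)
      (fun h => hvb h.symm) (by rintro rfl; exact huK ha) (by rintro rfl; exact hvK hb)
  by_cases hsub : ∀ a ∈ K, ¬ G.Adj u a → ¬ G.Adj v a
  · obtain ⟨z, hz, huz⟩ := hu
    refine ⟨u, v, z, huv, huK, hz, huz, hsub z hz huz, fun k hk hkz => ?_⟩
    by_contra huk
    exact hkz (common hk hz huk (hsub k hk huk) huz (hsub z hz huz))
  · push Not at hsub
    obtain ⟨a, ha, hua, hva⟩ := hsub
    have hsub' : ∀ b ∈ K, ¬ G.Adj v b → ¬ G.Adj u b := fun b hb hvb hub =>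
      nested ha hb hua hva hub hvb
    obtain ⟨z, hz, hvz⟩ := hv
    refine ⟨v, u, z, huv.symm, hvK, hz, hvz, hsub' z hz hvz, fun k hk hkz => ?_⟩
    by_contra hvk
    exact hkz (common hk hz (hsub' k hk hvk) hvk (hsub' z hz hvz) hvz)

/-- A clique maximizing the sum of `degree + 1` over its vertices has independent complement. -/
theorem IsChordal.isSplit {V : Type*} [Fintype V] {G : SimpleGraph V} (hG : IsChordal G)
    (hGc : IsChordal Gᶜ) : IsSplit G := by
  classical
  obtain ⟨K, hKmem, hmax⟩ := Finset.exists_max_image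
    (Finset.univ.filter fun K : Finset V => G.IsClique (K : Set V))
    (fun K => ∑ v ∈ K, (G.degree v + 1)) ⟨∅, by simp⟩
  have hK : G.IsClique (K : Set V) := by simpa using hKmem
  replace hmax (L : Finset V) (hL : G.IsClique (L : Set V)) :
      ∑ v ∈ L, (G.degree v + 1) ≤ ∑ v ∈ K, (G.degree v + 1) := hmax L (by simpa using hL)
  have nonadj (x : V) (hx : x ∉ K) : ∃ a ∈ (K : Set V), ¬ G.Adj x a := by
    by_contra! hxK
    have := hmax (insert x K) (by
      rw [Finset.coe_insert]
      exact hK.insert fun b hb _ => hxK b hb)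
    rw [Finset.sum_insert hx] at this
    omega
  refine ⟨K, (K : Set V)ᶜ, Set.union_compl_self _, Set.inter_compl_self _, hK,
    fun u hu v hv huv => ?_⟩
  obtain ⟨x, y, z, hxy, hxK, hz, hxz, hyz, hx⟩ :=
    hK.exists_unique_nonadj hG hGc huv (nonadj u hu) (nonadj v hv) hu hv
  have hdeg : G.degree x ≤ G.degree z := by
    have := hmax (insert x (K.erase z)) (by
      rw [Finset.coe_insert, Finset.coe_erase]
      exact (hK.subset Set.sdiff_subset).insert fun b hb _ => hx b hb.1 hb.2)
    rw [Finset.sum_insert (fun h => hxK (Finset.mem_of_mem_erase h)),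
      ← Finset.add_sum_erase K _ hz] at this
    omega
  obtain ⟨w, hzw, hxw⟩ : ∃ w, G.Adj z w ∧ ¬ G.Adj x w := by
    by_contra! hsub
    have hss : G.neighborFinset z ⊂ G.neighborFinset x := by
      refine Finset.ssubset_iff_of_subset (fun w hw => ?_) |>.2 ⟨y, ?_, ?_⟩
      · simpa using hsub w (by simpa using hw)
      · simpa using hxy
      · simpa using fun h : G.Adj z y => hyz h.symm
    exact absurd (Finset.card_lt_card hss) (not_lt.2 hdeg)
  have hwK : w ∉ K := fun hw => hxw (hx w hw hzw.ne')
  have hwy : G.Adj w y := by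
    by_contra hwy
    exact hGc.false_of_two_disjoint_edges hzw hxy (fun h => hxz h.symm) (fun h => hyz h.symm)
      (fun h => hxw h.symm) hwy
  obtain ⟨k, hk, hwk⟩ := nonadj w hwK
  have hkz : k ≠ z := by rintro rfl; exact hwk hzw.symm
  have hkzadj : G.Adj k z := hK hk hz hkz
  by_cases hky : G.Adj k y
  · exact hG.false_of_four_cycle hkzadj hzw hwy hky.symm (fun h => hwk h.symm)
      (fun h => hyz h.symm) (by rintro rfl; exact hwK hk) (by rintro rfl; exact hxz hxy)
  · exact hG.false_of_five_cycle hkzadj hzw hwy hxy.symm (hx k hk hkz) (fun h => hwk h.symm)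
      (fun h => hyz h.symm) (fun h => hxw h.symm) (fun h => hky h.symm) hxz

theorem split_iff_chordal_and_compl_chordal {V : Type*} [Fintype V]
    (G : SimpleGraph V) :
    IsSplit G ↔ IsChordal G ∧ IsChordal Gᶜ :=
  ⟨fun h => ⟨h.isChordal, h.compl.isChordal⟩, fun h => h.1.isSplit h.2⟩
end

section
/- For every n ≥ 2 the graph H_n is a co-TT graph, where H_n consists of a path w, x_1, ..., x_n, v, a vertex y adjacent to w and all x_i (1 ≤ i ≤ n), a vertex z adjacent to v and all x_i, the edge yz, and a vertex u adjacent only to y and z. -/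
/-- `G` is a co-TT (signed-interval) graph. -/
def IsCoTT {V : Type*} (G : SimpleGraph V) : Prop :=
  ∃ l r : V → ℝ, ∀ u v : V, u ≠ v → (G.Adj u v ↔ l u ≤ r v ∧ l v ≤ r u)

/-- Base adjacency of `H_n`.  Vertices: `.inl i` is `x_{i+1}` for `0 ≤ i < n`;
`.inr 0 = w`, `.inr 1 = v`, `.inr 2 = y`, `.inr 3 = z`, `.inr 4 = u`.  Edges:
path `w, x_1, …, x_n, v`; `y` adjacent to `w` and every `x_i`; `z` adjacent to `v`
and every `x_i`; `yz`; `uy`; `uz`. -/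
def hnRel (n : ℕ) (a b : Fin n ⊕ Fin 5) : Prop :=
  (∃ i j : Fin n, a = .inl i ∧ b = .inl j ∧ (j : ℕ) = (i : ℕ) + 1) ∨
  (∃ i : Fin n, a = .inr 0 ∧ b = .inl i ∧ (i : ℕ) = 0) ∨
  (∃ i : Fin n, a = .inl i ∧ (i : ℕ) + 1 = n ∧ b = .inr 1) ∨
  (a = .inr 2 ∧ b = .inr 0) ∨
  (∃ i : Fin n, a = .inr 2 ∧ b = .inl i) ∨
  (a = .inr 3 ∧ b = .inr 1) ∨
  (∃ i : Fin n, a = .inr 3 ∧ b = .inl i) ∨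
  (a = .inr 2 ∧ b = .inr 3) ∨
  (a = .inr 4 ∧ b = .inr 2) ∨ (a = .inr 4 ∧ b = .inr 3)

/-- The graph `H_n`. -/
def HnGraph (n : ℕ) : SimpleGraph (Fin n ⊕ Fin 5) :=
  SimpleGraph.fromRel (hnRel n)

/-- Left ends of a signed-interval model of `H_n`: `x_{i+1}` is `[2i, 2i+2]`, `w` is `[0, 0]`,
`v` is `[2n, 2n]`, `y` is `[0, 2n-1]`, `z` is `[1, 2n]`, and `u` is `[1, 2n-1]` reversed. -/
def hnLeft (n : ℕ) : Fin n ⊕ Fin 5 → ℤ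
  | .inl i => 2 * (i : ℕ)
  | .inr j => ![0, 2 * (n : ℤ), 0, 1, 2 * (n : ℤ) - 1] j

/-- Right ends of the signed-interval model `hnLeft` of `H_n`. -/
def hnRight (n : ℕ) : Fin n ⊕ Fin 5 → ℤ
  | .inl i => 2 * (i : ℕ) + 2
  | .inr j => ![0, 2 * (n : ℤ), 2 * (n : ℤ) - 1, 2 * (n : ℤ), 1] j

theorem hnGraph_adj_iff {n : ℕ} (hn : 2 ≤ n) {a b : Fin n ⊕ Fin 5} (hab : a ≠ b) :
    (HnGraph n).Adj a b ↔ hnLeft n a ≤ hnRight n b ∧ hnLeft n b ≤ hnRight n a := by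
  simp only [HnGraph, SimpleGraph.fromRel_adj, hab, ne_eq, not_false_eq_true, true_and]
  rcases a with i | a <;> rcases b with j | b
  · have hij : (i : ℕ) ≠ j := fun h => hab (congrArg Sum.inl (Fin.ext h))
    simp [hnRel, hnLeft, hnRight]
    omega
  · have hi := i.isLt
    fin_cases b <;> simp [hnRel, hnLeft, hnRight] <;> omega
  · have hj := j.isLt
    fin_cases a <;> simp [hnRel, hnLeft, hnRight] <;> omega
  · fin_cases a <;> fin_cases b <;> simp [hnRel, hnLeft, hnRight] at hab ⊢ <;> omega

/-- For every `n ≥ 2`, `H_n` is a co-TT graph. -/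
theorem HnGraph_isCoTT : ∀ n : ℕ, 2 ≤ n → IsCoTT (HnGraph n) := by
  intro n hn
  refine ⟨fun a => hnLeft n a, fun a => hnRight n a, fun a b hab => ?_⟩
  simpa only [Int.cast_le] using hnGraph_adj_iff hn hab
end
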